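/- arXiv:2509.21229 — 7 statements merged into one kernel-verified Lean document; each statement's English description precedes it below -/
import Mathlib

section
/- Let K ≥ 0 and let f : ℝ → ℝ be bounded and differentiable with |f'(x)| ≤ C·⟨x⟩^K for all x ∈ ℝ and some constant C > 0. Then for every x ∈ ℝ the principal value f̃(x) = (1/π)·lim_{ε→0⁺} ∫_{|x−t|>ε} (1/(x−t) + t/(1+t²))·f(t) dt exists, and there is a constant C' > 0 (depending on f) such that |f̃(x)| ≤ C'·(log(1+|x|) + ⟨x⟩^K) for all x ∈ ℝ. -/
/-!
The singularity of the kernel at `t = x` is removed by subtracting `f x / (x - t)` on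
`|x - t| ≤ 1`. This does not change the truncated integrals, because `1 / (x - t)` is
odd about `x` (`integral_odd_annulus`). The regularized integrand `reg f x` is integrable, so the
truncated integrals converge to its integral by dominated convergence.

The growth bound comes from a single integrable majorant of `reg f x` (`abs_reg_le`):
* on `|x - t| ≤ 1` the mean value theorem bounds the difference quotient by a multiple of `⟨x⟩^K`,
  since `⟨t⟩ ≤ 2⟨x⟩` there;
* on `|x - t| > 1`, `|t| ≤ 2(1 + |x|)` the two terms of the kernel are bounded separately by
  `2 / (1 + |x - t|)` and `2 / (1 + |t|)`, which contribute `log (1 + |x|)`;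
* on `|t| > 2(1 + |x|)` the two terms nearly cancel, and the kernel is dominated by twice a
  Poisson kernel of width `2(1 + |x|)`, whose integral is an absolute constant.
-/

open MeasureTheory

/-- The Japanese bracket `⟨x⟩ = (1 + x²)^(1/2)`. -/
noncomputable def brak (x : ℝ) : ℝ := Real.sqrt (1 + x ^ 2)

/-! ### Integrable majorants of the kernel -/

/-- The function `1 / (1 + |s|)` truncated to `|s| ≤ R`; its integral is `2 log (1 + R)`
for `R ≥ 0`. -/
noncomputable def cutLog (R : ℝ) : ℝ → ℝ :=
  (Set.Icc (-R) R).indicator fun s => 1 / (1 + |s|)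

lemma cutLog_nonneg (R s : ℝ) : 0 ≤ cutLog R s :=
  Set.indicator_nonneg (fun _ _ => by positivity) s

lemma continuous_inv_one_add_abs : Continuous fun s : ℝ => 1 / (1 + |s|) :=
  continuous_const.div (by fun_prop) fun s => by positivity

lemma integrable_cutLog (R : ℝ) : Integrable (cutLog R) := by
  refine IntegrableOn.integrable_indicator ?_ measurableSet_Icc
  exact continuous_inv_one_add_abs.continuousOn.integrableOn_compact isCompact_Icc

lemma integral_cutLog {R : ℝ} (hR : 0 ≤ R) : ∫ s, cutLog R s = 2 * Real.log (1 + R) := by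
  have hc := continuous_inv_one_add_abs
  have pos : ∫ s in (0 : ℝ)..R, 1 / (1 + |s|) = Real.log (1 + R) := by
    rw [intervalIntegral.integral_eq_sub_of_hasDerivAt (f := fun s => Real.log (1 + s))
      (fun s hs => ?_) (hc.intervalIntegrable _ _)]
    · simp
    · rw [Set.uIcc_of_le hR] at hs
      rw [abs_of_nonneg hs.1]
      exact ((hasDerivAt_id s).const_add 1).log (by have := hs.1; simp; linarith)
  have neg : ∫ s in (-R)..0, 1 / (1 + |s|) = Real.log (1 + R) := by
    rw [← pos]
    have := intervalIntegral.integral_comp_neg (a := 0) (b := R)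
      (fun s : ℝ => 1 / (1 + |s|))
    simp only [abs_neg, neg_zero] at this
    exact this.symm
  unfold cutLog
  rw [integral_indicator measurableSet_Icc, integral_Icc_eq_integral_Ioc,
    ← intervalIntegral.integral_of_le (by linarith),
    ← intervalIntegral.integral_add_adjacent_intervals (b := 0)
      (hc.intervalIntegrable _ _) (hc.intervalIntegrable _ _), pos, neg]
  ring

/-- The Poisson kernel of width `A`, normalized to have integral `π`. -/
noncomputable def pois (A t : ℝ) : ℝ := A⁻¹ * (1 + (t / A) ^ 2)⁻¹

lemma pois_nonneg {A : ℝ} (hA : 0 < A) (t : ℝ) : 0 ≤ pois A t := by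
  unfold pois; positivity

lemma integrable_pois {A : ℝ} (hA : 0 < A) : Integrable (pois A) :=
  (integrable_inv_one_add_sq.comp_div hA.ne').const_mul _

lemma integral_pois {A : ℝ} (hA : 0 < A) : ∫ t, pois A t = Real.pi := by
  unfold pois
  rw [integral_const_mul, Measure.integral_comp_div (fun t : ℝ => (1 + t ^ 2)⁻¹),
    integral_univ_inv_one_add_sq, abs_of_pos hA, smul_eq_mul]
  field_simp

lemma abs_div_one_add_sq_le (t : ℝ) : |t / (1 + t ^ 2)| ≤ 1 := by
  rw [abs_div, abs_of_pos (by positivity : (0 : ℝ) < 1 + t ^ 2), div_le_one (by positivity)]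
  nlinarith [sq_abs t, sq_nonneg (|t| - 1)]

/-- Away from the singularity the kernel has an explicit integrable majorant. The cut-off terms serve
the range `|t| ≤ 2(1 + |x|)`, where `|x - t| ≤ 3(1 + |x|)`; the Poisson term serves the rest. -/
lemma abs_kernel_le {x t : ℝ} (h : 1 < |x - t|) :
    |1 / (x - t) + t / (1 + t ^ 2)| ≤
      2 * cutLog (3 * (1 + |x|)) (x - t) + 2 * cutLog (3 * (1 + |x|)) t
        + 2 * pois (2 * (1 + |x|)) t := by
  have hx := abs_nonneg x
  have ht := abs_nonneg t
  have hA : 0 < 2 * (1 + |x|) := by positivity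
  have ht2 := sq_abs t
  by_cases hc : |t| ≤ 2 * (1 + |x|)
  · have h1 : |x - t| ≤ 3 * (1 + |x|) := (abs_sub x t).trans (by linarith)
    have h2 : |t| ≤ 3 * (1 + |x|) := by linarith
    have e1 : cutLog (3 * (1 + |x|)) (x - t) = 1 / (1 + |x - t|) :=
      Set.indicator_of_mem (Set.mem_Icc.mpr (abs_le.mp h1)) _
    have e2 : cutLog (3 * (1 + |x|)) t = 1 / (1 + |t|) :=
      Set.indicator_of_mem (Set.mem_Icc.mpr (abs_le.mp h2)) _
    have b1 : |1 / (x - t)| ≤ 2 * (1 / (1 + |x - t|)) := by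
      rw [abs_div, abs_one, ← mul_div_assoc, div_le_div_iff₀ (by linarith) (by linarith)]
      linarith
    have b2 : |t / (1 + t ^ 2)| ≤ 2 * (1 / (1 + |t|)) := by
      rw [abs_div, abs_of_pos (by positivity : (0 : ℝ) < 1 + t ^ 2), ← mul_div_assoc,
        div_le_div_iff₀ (by positivity) (by positivity)]
      nlinarith [sq_nonneg (|t| - 1)]
    rw [e1, e2]
    linarith [abs_add_le (1 / (x - t)) (t / (1 + t ^ 2)), pois_nonneg hA t]
  · push Not at hc
    have hxt : x - t ≠ 0 := by
      intro h0; rw [h0] at h; norm_num at h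
    -- Over a common denominator the leading terms of order `1 / t` cancel.
    have e : 1 / (x - t) + t / (1 + t ^ 2) = (1 + x * t) / ((x - t) * (1 + t ^ 2)) := by
      field_simp; ring
    have num : |1 + x * t| ≤ (1 + |x|) * |t| := by
      refine (abs_add_le _ _).trans ?_
      rw [abs_one, abs_mul]; nlinarith
    have den : |t| ≤ 2 * |x - t| := by
      have := abs_sub_abs_le_abs_sub t x
      rw [abs_sub_comm t x] at this
      linarith
    have hp : 2 * pois (2 * (1 + |x|)) t =
        2 * (2 * (1 + |x|)) / ((2 * (1 + |x|)) ^ 2 + t ^ 2) := by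
      unfold pois; field_simp
    have key : |(1 + x * t) / ((x - t) * (1 + t ^ 2))| ≤ 2 * pois (2 * (1 + |x|)) t := by
      rw [hp, abs_div, abs_mul, abs_of_pos (by positivity : (0 : ℝ) < 1 + t ^ 2)]
      have step : |1 + x * t| / (|x - t| * (1 + t ^ 2)) ≤ 2 * (1 + |x|) / (1 + t ^ 2) := by
        rw [div_le_div_iff₀ (by positivity) (by positivity)]
        have : |1 + x * t| ≤ 2 * (1 + |x|) * |x - t| := by nlinarith
        nlinarith [mul_le_mul_of_nonneg_right this (by positivity : (0 : ℝ) ≤ 1 + t ^ 2)]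
      refine step.trans ?_
      rw [div_le_div_iff₀ (by positivity) (by positivity)]
      have : (2 * (1 + |x|)) ^ 2 ≤ t ^ 2 := by rw [← ht2]; gcongr
      nlinarith
    rw [e]
    linarith [cutLog_nonneg (3 * (1 + |x|)) (x - t), cutLog_nonneg (3 * (1 + |x|)) t]

/-! ### The difference quotient near the singularity -/

lemma one_le_brak (x : ℝ) : 1 ≤ brak x := by
  unfold brak; rw [Real.one_le_sqrt]; nlinarith [sq_nonneg x]

lemma brak_le_two_mul {x t : ℝ} (h : |x - t| ≤ 1) : brak t ≤ 2 * brak x := by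
  have h4 : 2 * brak x = Real.sqrt (4 * (1 + x ^ 2)) := by
    rw [Real.sqrt_mul (by norm_num), show (4 : ℝ) = 2 ^ 2 by norm_num,
      Real.sqrt_sq (by norm_num), brak]
  rw [h4]
  refine Real.sqrt_le_sqrt ?_
  have : (x - t) ^ 2 ≤ 1 := (sq_le_one_iff_abs_le_one _).mpr h
  nlinarith [sq_nonneg (2 * x - t)]

/-- Mean value theorem on the unit interval around `x`. -/
lemma abs_sub_le_of_deriv {K C : ℝ} {f : ℝ → ℝ} (hK : 0 ≤ K) (hC : 0 < C)
    (hdiff : Differentiable ℝ f) (hf' : ∀ x : ℝ, |deriv f x| ≤ C * brak x ^ K)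
    {x t : ℝ} (h : |x - t| ≤ 1) :
    |f t - f x| ≤ C * 2 ^ K * brak x ^ K * |x - t| := by
  have hbx := one_le_brak x
  have hmem : t ∈ Set.Icc (x - 1) (x + 1) := by
    rw [abs_le] at h; constructor <;> linarith
  have := (convex_Icc (x - 1) (x + 1)).norm_image_sub_le_of_norm_deriv_le
    (f := f) (C := C * 2 ^ K * brak x ^ K) (fun y _ => hdiff y) (fun y hy => ?_)
    (show x ∈ Set.Icc (x - 1) (x + 1) by constructor <;> linarith) hmem
  · rwa [Real.norm_eq_abs, Real.norm_eq_abs, abs_sub_comm t x] at this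
  · rw [Real.norm_eq_abs, mul_assoc, ← Real.mul_rpow (by norm_num) (by linarith)]
    refine (hf' y).trans ?_
    have hy' : |x - y| ≤ 1 := by
      rw [abs_le]; constructor <;> linarith [hy.1, hy.2]
    gcongr
    · linarith [one_le_brak y]
    · exact brak_le_two_mul hy'

/-! ### The regularized integrand -/

open Classical in
/-- The integrand of `f̃ x` with `f x / (x - t)` subtracted on `|x - t| ≤ 1`. -/
noncomputable def reg (f : ℝ → ℝ) (x t : ℝ) : ℝ :=
  (1 / (x - t) + t / (1 + t ^ 2)) * f t - f x * (if |x - t| ≤ 1 then 1 / (x - t) else 0)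

lemma measurable_reg {f : ℝ → ℝ} (hf : Continuous f) (x : ℝ) : Measurable (reg f x) := by
  have hm := hf.measurable
  unfold reg
  refine Measurable.sub (by fun_prop) (Measurable.const_mul ?_ _)
  refine Measurable.ite (measurableSet_le (by fun_prop) (by fun_prop)) (by fun_prop) (by fun_prop)

/-- The integrable majorant of `reg f x` when `|f| ≤ B` and `D` bounds `reg f x` near `x`. -/
noncomputable def maj (B D x t : ℝ) : ℝ :=
  B * (2 * cutLog (3 * (1 + |x|)) (x - t) + 2 * cutLog (3 * (1 + |x|)) t
        + 2 * pois (2 * (1 + |x|)) t)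
    + (Set.Icc (x - 1) (x + 1)).indicator (fun _ => D) t

lemma integrable_maj_aux (x : ℝ) : Integrable fun t =>
    2 * cutLog (3 * (1 + |x|)) (x - t) + 2 * cutLog (3 * (1 + |x|)) t
        + 2 * pois (2 * (1 + |x|)) t :=
  ((((integrable_cutLog _).comp_sub_left x).const_mul 2).add
    ((integrable_cutLog _).const_mul 2)).add ((integrable_pois (by positivity)).const_mul 2)

lemma integrable_indicator_unit (D x : ℝ) :
    Integrable ((Set.Icc (x - 1) (x + 1)).indicator fun _ => D) :=
  IntegrableOn.integrable_indicator
    (integrableOn_const (by simp)) measurableSet_Icc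

lemma integrable_maj (B D x : ℝ) : Integrable (maj B D x) :=
  ((integrable_maj_aux x).const_mul B).add (integrable_indicator_unit D x)

lemma integral_maj (B D x : ℝ) :
    ∫ t, maj B D x t =
      B * (8 * Real.log (1 + 3 * (1 + |x|)) + 2 * Real.pi) + 2 * D := by
  have i1 : Integrable fun t => 2 * cutLog (3 * (1 + |x|)) (x - t) :=
    ((integrable_cutLog _).comp_sub_left x).const_mul 2
  have i2 : Integrable fun t => 2 * cutLog (3 * (1 + |x|)) t :=
    (integrable_cutLog _).const_mul 2
  have i3 : Integrable fun t => 2 * pois (2 * (1 + |x|)) t :=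
    (integrable_pois (by positivity)).const_mul 2
  have i12 : Integrable fun t =>
      2 * cutLog (3 * (1 + |x|)) (x - t) + 2 * cutLog (3 * (1 + |x|)) t := i1.add i2
  unfold maj
  rw [integral_add ((integrable_maj_aux x).const_mul B) (integrable_indicator_unit D x),
    integral_const_mul,
    integral_add i12 i3, integral_add i1 i2,
    integral_const_mul, integral_const_mul, integral_const_mul,
    integral_sub_left_eq_self (cutLog (3 * (1 + |x|))) volume x,
    integral_cutLog (by positivity), integral_pois (by positivity),
    integral_indicator measurableSet_Icc, setIntegral_const, Real.volume_real_Icc_of_le (by linarith),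
    smul_eq_mul]
  ring

lemma abs_reg_le {K C B : ℝ} {f : ℝ → ℝ} (hK : 0 ≤ K) (hC : 0 < C)
    (hb : ∀ x : ℝ, |f x| ≤ B)
    (hdiff : Differentiable ℝ f) (hf' : ∀ x : ℝ, |deriv f x| ≤ C * brak x ^ K) (x t : ℝ) :
    |reg f x t| ≤ maj B (C * 2 ^ K * brak x ^ K + B) x t := by
  have hB : 0 ≤ B := (abs_nonneg _).trans (hb 0)
  have hbx := one_le_brak x
  unfold reg maj
  by_cases h : |x - t| ≤ 1
  · have hmem : t ∈ Set.Icc (x - 1) (x + 1) := by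
      rw [abs_le] at h; constructor <;> linarith
    rw [if_pos h, Set.indicator_of_mem hmem]
    have nn : 0 ≤ B * (2 * cutLog (3 * (1 + |x|)) (x - t) + 2 * cutLog (3 * (1 + |x|)) t
        + 2 * pois (2 * (1 + |x|)) t) := by
      have h1 := cutLog_nonneg (3 * (1 + |x|)) (x - t)
      have h2 := cutLog_nonneg (3 * (1 + |x|)) t
      have h3 := pois_nonneg (by positivity : 0 < 2 * (1 + |x|)) t
      positivity
    have e : (1 / (x - t) + t / (1 + t ^ 2)) * f t - f x * (1 / (x - t)) =
        (f t - f x) / (x - t) + t / (1 + t ^ 2) * f t := by ring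
    have b1 : |(f t - f x) / (x - t)| ≤ C * 2 ^ K * brak x ^ K := by
      rw [abs_div]
      refine div_le_of_le_mul₀ (abs_nonneg _) (by positivity) ?_
      exact abs_sub_le_of_deriv hK hC hdiff hf' h
    have b2 : |t / (1 + t ^ 2) * f t| ≤ B := by
      rw [abs_mul]
      calc _ ≤ 1 * B := mul_le_mul (abs_div_one_add_sq_le t) (hb t) (abs_nonneg _) zero_le_one
        _ = B := one_mul B
    rw [e]
    linarith [abs_add_le ((f t - f x) / (x - t)) (t / (1 + t ^ 2) * f t)]
  · have hmem : t ∉ Set.Icc (x - 1) (x + 1) := by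
      intro hm; apply h; rw [abs_le]; constructor <;> linarith [hm.1, hm.2]
    rw [if_neg h, Set.indicator_of_notMem hmem, mul_zero, sub_zero, add_zero, abs_mul, mul_comm]
    push Not at h
    exact mul_le_mul (hb t) (abs_kernel_le h) (abs_nonneg _) hB

/-! ### Truncated integrals and their limit -/

open Classical in
/-- The kernel `1 / s` cut off to the annulus `ε < |s| ≤ 1` (zero if `ε ≥ 1`). -/
noncomputable def annulus (ε s : ℝ) : ℝ := if ε < |s| ∧ |s| ≤ 1 then 1 / s else 0

lemma integral_odd_annulus (ε : ℝ) : ∫ s, annulus ε s = 0 := by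
  have h : ∫ s, annulus ε (-s) = ∫ s, annulus ε s := integral_neg_eq_self _ _
  have odd : ∀ s, annulus ε (-s) = -annulus ε s := by
    intro s
    unfold annulus
    rw [abs_neg]
    split_ifs
    · ring
    · simp
  simp only [odd, integral_neg] at h
  linarith

lemma integrable_annulus {ε : ℝ} (hε : 0 < ε) : Integrable (annulus ε) := by
  refine Integrable.mono' (g := (Set.Icc (-1 : ℝ) 1).indicator fun _ => 1 / ε)
    (IntegrableOn.integrable_indicator (integrableOn_const (by simp)) measurableSet_Icc) ?_ ?_
  · refine Measurable.aestronglyMeasurable (Measurable.ite ?_ (by fun_prop) (by fun_prop))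
    have m1 : MeasurableSet {s : ℝ | ε < |s|} := measurableSet_lt (by fun_prop) (by fun_prop)
    have m2 : MeasurableSet {s : ℝ | |s| ≤ 1} := measurableSet_le (by fun_prop) (by fun_prop)
    exact m1.inter m2
  · refine Filter.Eventually.of_forall fun s => ?_
    unfold annulus
    split_ifs with h
    · rw [Set.indicator_of_mem (Set.mem_Icc.mpr (abs_le.mp h.2)), Real.norm_eq_abs, abs_div, abs_one]
      exact one_div_le_one_div_of_le hε h.1.le
    · rw [norm_zero]
      exact Set.indicator_nonneg (fun _ _ => by positivity) s

/-- Regularizing does not change the truncated integrals: on `ε < |x - t|` the two integrands differ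
by `f x` times the odd kernel `annulus ε (x - t)`. -/
lemma truncated_eq {f : ℝ → ℝ} {x ε : ℝ} (hε : 0 < ε) (hint : Integrable (reg f x)) :
    ∫ t in {t : ℝ | ε < |x - t|}, (1 / (x - t) + t / (1 + t ^ 2)) * f t =
      ∫ t, {t : ℝ | ε < |x - t|}.indicator (reg f x) t := by
  have hS : MeasurableSet {t : ℝ | ε < |x - t|} :=
    measurableSet_lt (by fun_prop) (by fun_prop)
  have e : {t : ℝ | ε < |x - t|}.indicator
        (fun t => (1 / (x - t) + t / (1 + t ^ 2)) * f t) =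
      fun t => {t : ℝ | ε < |x - t|}.indicator (reg f x) t + f x * annulus ε (x - t) := by
    funext t
    by_cases h : ε < |x - t|
    · simp only [Set.indicator, Set.mem_ofPred_eq, h, if_true, annulus, true_and, reg]
      ring
    · simp [Set.indicator, h, annulus]
  rw [← integral_indicator hS, e, integral_add (hint.indicator hS)
    (((integrable_annulus hε).comp_sub_left x).const_mul _), integral_const_mul,
    integral_sub_left_eq_self (annulus ε) volume x, integral_odd_annulus, mul_zero, add_zero]

lemma tendsto_truncated {f : ℝ → ℝ} {x : ℝ} (hint : Integrable (reg f x)) :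
    Filter.Tendsto
      (fun ε : ℝ => ∫ t in {t : ℝ | ε < |x - t|}, (1 / (x - t) + t / (1 + t ^ 2)) * f t)
      (nhdsWithin 0 (Set.Ioi 0)) (nhds (∫ t, reg f x t)) := by
  have hS (ε : ℝ) : MeasurableSet {t : ℝ | ε < |x - t|} :=
    measurableSet_lt (by fun_prop) (by fun_prop)
  have lim : Filter.Tendsto
      (fun ε : ℝ => ∫ t, {t : ℝ | ε < |x - t|}.indicator (reg f x) t)
      (nhdsWithin 0 (Set.Ioi 0)) (nhds (∫ t, reg f x t)) := by
    refine tendsto_integral_filter_of_dominated_convergence (fun t => ‖reg f x t‖)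
      (Filter.Eventually.of_forall fun ε => (hint.indicator (hS ε)).aestronglyMeasurable)
      (Filter.Eventually.of_forall fun ε => Filter.Eventually.of_forall fun t =>
        norm_indicator_le_norm_self _ _) hint.norm ?_
    filter_upwards [Measure.ae_ne volume x] with t ht
    refine tendsto_const_nhds.congr' ?_
    have : 0 < |x - t| := abs_pos.mpr (sub_ne_zero.mpr ht.symm)
    filter_upwards [mem_nhdsWithin_of_mem_nhds (Iio_mem_nhds this)] with ε hε
    exact (Set.indicator_of_mem (s := {t : ℝ | ε < |x - t|}) hε _).symm
  refine lim.congr' ?_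
  filter_upwards [self_mem_nhdsWithin] with ε hε
  exact (truncated_eq hε hint).symm

/-! ### Existence and growth of the conjugate function -/

theorem stmt6 (K C : ℝ) (f : ℝ → ℝ) (hK : 0 ≤ K) (hC : 0 < C)
    (hb : ∃ B : ℝ, ∀ x : ℝ, |f x| ≤ B)
    (hdiff : Differentiable ℝ f)
    (hf' : ∀ x : ℝ, |deriv f x| ≤ C * brak x ^ K) :
    ∃ F : ℝ → ℝ,
      (∀ x : ℝ, Filter.Tendsto
        (fun ε : ℝ => (1 / Real.pi) *
          ∫ t in {t : ℝ | ε < |x - t|}, (1 / (x - t) + t / (1 + t ^ 2)) * f t)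
        (nhdsWithin 0 (Set.Ioi 0)) (nhds (F x))) ∧
      ∃ C' : ℝ, 0 < C' ∧ ∀ x : ℝ, |F x| ≤ C' * (Real.log (1 + |x|) + brak x ^ K) := by
  obtain ⟨B, hB⟩ := hb
  have hB0 : 0 ≤ B := (abs_nonneg _).trans (hB 0)
  have hbd := abs_reg_le hK hC hB hdiff hf'
  have hint (x : ℝ) : Integrable (reg f x) :=
    (integrable_maj B _ x).mono' (measurable_reg hdiff.continuous x).aestronglyMeasurable
      (Filter.Eventually.of_forall (hbd x))
  refine ⟨fun x => (1 / Real.pi) * ∫ t, reg f x t,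
    fun x => (tendsto_truncated (hint x)).const_mul _,
    B * 42 + 2 * (C * 2 ^ K), by positivity, fun x => ?_⟩
  have h1 : |∫ t, reg f x t| ≤
      B * (8 * Real.log (1 + 3 * (1 + |x|)) + 2 * Real.pi)
        + 2 * (C * 2 ^ K * brak x ^ K + B) := by
    rw [← integral_maj, ← Real.norm_eq_abs]
    exact norm_integral_le_of_norm_le (integrable_maj _ _ x)
      (Filter.Eventually.of_forall (hbd x))
  have hx := abs_nonneg x
  have hlog : Real.log (1 + 3 * (1 + |x|)) ≤ 3 + Real.log (1 + |x|) := by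
    calc Real.log (1 + 3 * (1 + |x|)) ≤ Real.log (4 * (1 + |x|)) :=
          Real.log_le_log (by positivity) (by linarith)
      _ = Real.log 4 + Real.log (1 + |x|) := Real.log_mul (by norm_num) (by positivity)
      _ ≤ _ := by linarith [Real.log_le_sub_one_of_pos (by norm_num : (0 : ℝ) < 4)]
  have hL : 0 ≤ Real.log (1 + |x|) := Real.log_nonneg (by linarith)
  have hP : 1 ≤ brak x ^ K := Real.one_le_rpow (one_le_brak x) hK
  have hpi : 1 / Real.pi ≤ 1 := by
    rw [div_le_one Real.pi_pos]; linarith [Real.pi_gt_three]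
  have hM : 0 ≤ C * 2 ^ K := by positivity
  calc |(1 / Real.pi) * ∫ t, reg f x t| = (1 / Real.pi) * |∫ t, reg f x t| := by
        rw [abs_mul, abs_of_pos (by positivity : 0 < 1 / Real.pi)]
    _ ≤ |∫ t, reg f x t| := mul_le_of_le_one_left (abs_nonneg _) hpi
    _ ≤ _ := h1
    _ ≤ B * (8 * (3 + Real.log (1 + |x|)) + 2 * 4)
        + 2 * (C * 2 ^ K * brak x ^ K + B) := by
        gcongr
        exact Real.pi_le_four
    _ ≤ _ := by
        nlinarith [mul_nonneg hB0 hL, mul_nonneg hM hL,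
          mul_nonneg hB0 (sub_nonneg.mpr hP)]
end

section
/- Let α : ℝ → ℝ be a regular locally doubling weight with α(x) → ±∞ as x → ±∞, and let Λ ⊂ ℝ be α-uniformly separated (there is δ₀ > 0 with |α(λ) − α(λ')| > δ₀ for all distinct λ, λ' ∈ Λ) with upper α-density D⁺_α(Λ) < 1/(2π), i.e. there exist δ₁ > 0 and r₀ > 0 such that 2π·#(Λ ∩ I) ≤ (1−δ₁)·∫_I α'(t) dt for every bounded interval I with ∫_I α'(t) dt ≥ r₀. Then for all sufficiently small δ > 0 there exists a set Λ' ⊇ Λ which is α-uniformly separated, has α-uniformly bounded gaps (when written as a strictly increasing two-sided sequence (λₙ')_{n∈ℤ} with λₙ' → ±∞, one has |α(λ'_{n+1}) − α(λ'ₙ)| ≤ M for all n and some M > 0), and such that the function x ↦ (1−δ)·α(x) − 2π·n_{Λ'}(x) is bounded on ℝ. -/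
/-!
Since `α` is an increasing homeomorphism of `ℝ`, everything can be read off in the coordinate
`y = α x`: there `Λ` becomes a `δ₀`-separated set `A` whose number of points in `[a, b]` is at most
`(1 - δ₁) (b - a) / 2π` once `b - a ≥ r₀`.

For `0 < δ < min δ₁ 1`, take a large integer `N` and cut the line into blocks `[jL, (j + 1)L)` with
`L = 2πN / (1 - δ)`. Since `δ < δ₁`, each block holds fewer than `N` points of `A`, so it can be
filled up to exactly `N` points. `exists_fill_block` does this keeping the points separated: among
`2N` equally spaced candidates in the block, each point of `A` spoils at most one, so at least `N`
candidates remain available.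

Numbering the resulting set block by block (`exists_enumeration`) gives a strictly increasing
sequence `l` with `|(1 - δ) l n - 2πn| ≤ 2πN`. Bounded gaps, the limits at `±∞` and the bounded
discrepancy of the counting function (`countFun_range`) all follow from this single estimate.
-/

open MeasureTheory

/-- A regular locally doubling weight. -/
def RegularLocallyDoubling (α : ℝ → ℝ) : Prop :=
  ContDiff ℝ (⊤ : ℕ∞) α ∧ StrictMono α ∧ (∀ x, 0 < deriv α x) ∧
  ∃ m M C₀ R : ℝ, 0 < m ∧ 0 < M ∧ 0 < C₀ ∧ 0 < R ∧
    (∀ x y : ℝ, |α x - α y| ≤ 1 → R ≤ |x| → R ≤ |y| →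
      m * deriv α y ≤ deriv α x ∧ deriv α x ≤ M * deriv α y) ∧
    (∀ x : ℝ, R ≤ |x| → |deriv (deriv α) x| ≤ C₀ * (deriv α x) ^ 2)

/-- The counting function of a set `Λ ⊆ ℝ`: `n_Λ(x) = #(Λ ∩ (0, x])` for `x ≥ 0` and
`n_Λ(x) = −#(Λ ∩ (x, 0])` for `x < 0`. -/
noncomputable def countFun (Λ : Set ℝ) (x : ℝ) : ℝ :=
  if 0 ≤ x then ((Λ ∩ Set.Ioc 0 x).ncard : ℝ) else -((Λ ∩ Set.Ioc x 0).ncard : ℝ)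

/-- A finite set of at most `N` points in a block of length `2 * N * h` can be completed to exactly
`N` points of the block, each new one being `h / 4`-far from the other points and from the ends of
the block. -/
lemma exists_fill_block (a h : ℝ) (N : ℕ) (hh : 0 < h) (F : Finset ℝ)
    (hF : ∀ x ∈ F, a ≤ x ∧ x < a + 2 * N * h) (hc : F.card ≤ N) :
    ∃ S : Finset ℝ, F ⊆ S ∧ S.card = N ∧ (∀ x ∈ S, a ≤ x ∧ x < a + 2 * N * h) ∧
      ∀ x ∈ S, x ∉ F → (a + h / 4 ≤ x ∧ x ≤ a + 2 * N * h - h / 4) ∧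
        ∀ y ∈ S, y ≠ x → h / 4 ≤ |x - y| := by
  classical
  let g : ℕ → ℝ := fun i => a + (i + 1 / 2) * h
  have gsep : ∀ i j : ℕ, i ≠ j → h ≤ |g i - g j| := by
    intro i j hij
    have e : g i - g j = (((i : ℤ) - (j : ℤ) : ℤ) : ℝ) * h := by simp only [g]; push_cast; ring
    have h1 : (1 : ℝ) ≤ |(((i : ℤ) - (j : ℤ) : ℤ) : ℝ)| := by
      rw [← Int.cast_abs]
      exact_mod_cast Int.one_le_abs (sub_ne_zero.2 (by exact_mod_cast hij : (i : ℤ) ≠ j))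
    rw [e, abs_mul, abs_of_pos hh]
    nlinarith
  have ginj : Function.Injective g := by
    intro i j hij
    by_contra hne
    have := gsep i j hne
    rw [hij, sub_self, abs_zero] at this
    linarith
  let bad := (Finset.range (2 * N)).filter (fun i => ∃ y ∈ F, |g i - y| < h / 4)
  have hbad : bad.card ≤ F.card := by
    have hex : ∀ i : ℕ, ∃ y : ℝ, i ∈ bad → y ∈ F ∧ |g i - y| < h / 4 := by
      intro i
      by_cases hi : i ∈ bad
      · obtain ⟨y, hy⟩ := (Finset.mem_filter.1 hi).2
        exact ⟨y, fun _ => hy⟩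
      · exact ⟨0, fun h => absurd h hi⟩
    choose f hf using hex
    refine Finset.card_le_card_of_injOn f (fun i hi => (hf i hi).1) ?_
    intro i hi j hj hij
    by_contra hne
    have h1 := gsep i j hne
    have h2 := (hf i hi).2
    have h3 := (hf j hj).2
    rw [hij] at h2
    have h4 : |g i - g j| ≤ |g i - f j| + |g j - f j| := by
      rw [abs_sub_comm (g j)]; exact abs_sub_le _ _ _
    linarith
  have hsub : bad ⊆ Finset.range (2 * N) := Finset.filter_subset _ _
  have hgood : N - F.card ≤ (Finset.range (2 * N) \ bad).card := by
    rw [Finset.card_sdiff_of_subset hsub, Finset.card_range]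
    omega
  obtain ⟨T, hT, hTc⟩ := Finset.exists_subset_card_eq hgood
  have hTr : ∀ i ∈ T, i < 2 * N := fun i hi => by
    have := (Finset.mem_sdiff.1 (hT hi)).1
    exact Finset.mem_range.1 this
  have hTF : ∀ i ∈ T, ∀ y ∈ F, h / 4 ≤ |g i - y| := by
    intro i hi y hy
    by_contra hlt
    refine (Finset.mem_sdiff.1 (hT hi)).2
      (Finset.mem_filter.2 ⟨(Finset.mem_sdiff.1 (hT hi)).1, y, hy, ?_⟩)
    linarith
  have hTb : ∀ i ∈ T, a + h / 4 ≤ g i ∧ g i ≤ a + 2 * N * h - h / 4 := by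
    intro i hi
    have h1 : (i : ℝ) + 1 ≤ 2 * N := by exact_mod_cast hTr i hi
    have h2 : (0 : ℝ) ≤ i := Nat.cast_nonneg i
    simp only [g]
    constructor <;> nlinarith
  have hdisj : Disjoint F (T.image g) := by
    rw [Finset.disjoint_left]
    intro x hx hxT
    obtain ⟨i, hi, rfl⟩ := Finset.mem_image.1 hxT
    have := hTF i hi _ hx
    rw [sub_self, abs_zero] at this
    linarith
  refine ⟨F ∪ T.image g, Finset.subset_union_left, ?_, ?_, ?_⟩
  · rw [Finset.card_union_of_disjoint hdisj, Finset.card_image_of_injective _ ginj, hTc]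
    omega
  · intro x hx
    rcases Finset.mem_union.1 hx with hx | hx
    · exact hF x hx
    · obtain ⟨i, hi, rfl⟩ := Finset.mem_image.1 hx
      obtain ⟨h1, h2⟩ := hTb i hi
      constructor <;> linarith
  · intro x hx hxF
    rcases Finset.mem_union.1 hx with hx | hx
    · exact absurd hx hxF
    obtain ⟨i, hi, rfl⟩ := Finset.mem_image.1 hx
    refine ⟨hTb i hi, ?_⟩
    intro y hy hne
    rcases Finset.mem_union.1 hy with hy | hy
    · exact hTF i hi y hy
    · obtain ⟨j, hj, rfl⟩ := Finset.mem_image.1 hy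
      have := gsep i j (fun e => hne (by rw [e]))
      linarith

/-- A set with exactly `N` points in each block `[jL, (j + 1)L)` is enumerated increasingly so that
block `j` carries the indices `jN, …, jN + N - 1`. -/
lemma exists_enumeration (L : ℝ) (N : ℕ) (hL : 0 < L) (hN : 0 < N) (S : ℤ → Finset ℝ)
    (hc : ∀ j, (S j).card = N) (hS : ∀ j, ∀ x ∈ S j, j * L ≤ x ∧ x < (j + 1) * L) :
    ∃ l : ℤ → ℝ, StrictMono l ∧ (∀ n : ℤ, l n ∈ S (n / N)) ∧
      ∀ j, ∀ x ∈ S j, x ∈ Set.range l := by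
  have hNz : (0 : ℤ) < N := by exact_mod_cast hN
  have hr : ∀ n : ℤ, (n % N).toNat < N := by
    intro n
    have h1 := Int.emod_nonneg n hNz.ne'
    have h2 := Int.emod_lt_of_pos n hNz
    omega
  let e : ∀ j : ℤ, Fin N ↪o ℝ := fun j => (S j).orderEmbOfFin (hc j)
  have hmem : ∀ n : ℤ, e (n / N) ⟨(n % N).toNat, hr n⟩ ∈ S (n / N) :=
    fun n => Finset.orderEmbOfFin_mem _ _ _
  refine ⟨fun n => e (n / N) ⟨(n % N).toNat, hr n⟩, ?_, hmem, ?_⟩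
  · intro n k hnk
    show e (n / N) ⟨(n % N).toNat, hr n⟩ < e (k / N) ⟨(k % N).toNat, hr k⟩
    rcases (Int.ediv_le_ediv hNz hnk.le).lt_or_eq with hlt | heq
    · have h1 := (hS _ _ (hmem n)).2
      have h2 := (hS _ _ (hmem k)).1
      have h3 : ((n / N : ℤ) : ℝ) + 1 ≤ ((k / N : ℤ) : ℝ) := by exact_mod_cast hlt
      nlinarith
    · rw [heq]
      refine (e (k / N)).strictMono ?_
      rw [Fin.mk_lt_mk]
      have h1 := Int.mul_ediv_add_emod n N
      have h2 := Int.mul_ediv_add_emod k N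
      have h3 := Int.emod_nonneg n hNz.ne'
      rw [heq] at h1
      omega
  · intro j x hx
    have hx' : x ∈ Set.range (e j) := by
      rw [Finset.range_orderEmbOfFin]; exact hx
    obtain ⟨i, rfl⟩ := hx'
    have hi : (i : ℤ) < N := by exact_mod_cast i.2
    have h1 : ((i : ℤ) + N * j) / N = j := by
      rw [Int.add_mul_ediv_left _ _ hNz.ne', Int.ediv_eq_zero_of_lt (by omega) hi, zero_add]
    have h2 : ((i : ℤ) + N * j) % N = i := by
      rw [Int.add_mul_emod_self_left, Int.emod_eq_of_lt (by omega) hi]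
    refine ⟨i + N * j, ?_⟩
    show e (((i : ℤ) + N * j) / N) ⟨(((i : ℤ) + N * j) % N).toNat, hr _⟩ = e j i
    rw [h1]
    congr 1
    ext
    simp [h2]

lemma finite_inter_of_separated (A : Set ℝ) (d : ℝ) (hd : 0 < d)
    (hsep : ∀ x ∈ A, ∀ y ∈ A, x ≠ y → d < |x - y|) (a b : ℝ) :
    (A ∩ Set.Icc a b).Finite := by
  refine Set.Finite.of_finite_image (f := fun x : ℝ => ⌊x / d⌋) ?_ ?_
  · refine (Set.finite_Icc ⌊a / d⌋ ⌊b / d⌋).subset ?_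
    rintro _ ⟨x, ⟨_, h1, h2⟩, rfl⟩
    exact ⟨Int.floor_mono (by gcongr), Int.floor_mono (by gcongr)⟩
  · intro x hx y hy hxy
    by_contra hne
    have h1 := hsep x hx.1 y hy.1 hne
    have h2 := Int.abs_sub_lt_one_of_floor_eq_floor hxy
    rw [← sub_div, abs_div, abs_of_pos hd, div_lt_one hd] at h2
    linarith

/-- The theorem in the coordinate `y = α x`, i.e. for the identity weight. -/
lemma exists_completion (A : Set ℝ) (δ₀ δ₁ r₀ δ : ℝ) (hδ₀ : 0 < δ₀)
    (hsep : ∀ x ∈ A, ∀ y ∈ A, x ≠ y → δ₀ < |x - y|)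
    (hdens : ∀ a b : ℝ, a ≤ b → r₀ ≤ b - a →
      2 * Real.pi * ((A ∩ Set.Icc a b).ncard : ℝ) ≤ (1 - δ₁) * (b - a))
    (hδ : 0 < δ) (hδδ₁ : δ < δ₁) (hδ1 : δ < 1) :
    ∃ l : ℤ → ℝ, StrictMono l ∧ A ⊆ Set.range l ∧
      (∃ δ' : ℝ, 0 < δ' ∧ ∀ n, δ' ≤ l (n + 1) - l n) ∧
      ∃ C : ℝ, ∀ n : ℤ, |(1 - δ) * l n - 2 * Real.pi * n| ≤ C := by
  classical
  have hpi := Real.pi_gt_three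
  have h1δ : 0 < 1 - δ := by linarith
  obtain ⟨N, hNr⟩ := exists_nat_gt (max r₀ 1)
  have hNr0 : r₀ < N := (le_max_left _ _).trans_lt hNr
  have hN1 : (1 : ℝ) < N := (le_max_right _ _).trans_lt hNr
  have hN : 0 < N := by
    have : (0 : ℝ) < N := by linarith
    exact_mod_cast this
  have hNz : (0 : ℤ) < N := by exact_mod_cast hN
  -- With this spacing `h`, the block length `L = 2 N h` satisfies `(1 - δ) L = 2πN`.
  obtain ⟨h, hdef⟩ : ∃ h : ℝ, h = Real.pi / (1 - δ) := ⟨_, rfl⟩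
  have hhπ : (1 - δ) * h = Real.pi := by rw [hdef]; field_simp
  have hh : 0 < h := by rw [hdef]; positivity
  have hh1 : 1 ≤ h := by nlinarith
  obtain ⟨L, hLdef⟩ : ∃ L : ℝ, L = 2 * N * h := ⟨_, rfl⟩
  have hL : (1 - δ) * L = 2 * Real.pi * N := by rw [hLdef, ← hhπ]; ring
  have hLN : (N : ℝ) ≤ L := by nlinarith
  have hLpos : 0 < L := by linarith
  have hfin : ∀ j : ℤ, (A ∩ Set.Ico (j * L) ((j + 1) * L)).Finite := fun j =>
    (finite_inter_of_separated A δ₀ hδ₀ hsep (j * L) ((j + 1) * L)).subset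
      (Set.inter_subset_inter_right _ Set.Ico_subset_Icc_self)
  have hmemF : ∀ (j : ℤ) (x : ℝ),
      x ∈ (hfin j).toFinset ↔ x ∈ A ∧ j * L ≤ x ∧ x < (j + 1) * L := by
    intro j x
    simp
  have hcard : ∀ j, (hfin j).toFinset.card ≤ N := by
    intro j
    rw [← Set.ncard_eq_toFinset_card _ (hfin j)]
    have h1 := hdens (j * L) ((j + 1) * L) (by linarith) (by linarith)
    have h2 : (A ∩ Set.Ico (j * L) ((j + 1) * L)).ncard
        ≤ (A ∩ Set.Icc (j * L) ((j + 1) * L)).ncard :=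
      Set.ncard_le_ncard (Set.inter_subset_inter_right _ Set.Ico_subset_Icc_self)
        (finite_inter_of_separated A δ₀ hδ₀ hsep _ _)
    have h3 : 2 * Real.pi * ((A ∩ Set.Icc (j * L) ((j + 1) * L)).ncard : ℝ)
        ≤ 2 * Real.pi * N := by
      rw [← hL]
      nlinarith
    have h4 := le_of_mul_le_mul_left h3 (by positivity)
    exact h2.trans (by exact_mod_cast h4)
  have hfill := fun j : ℤ => exists_fill_block (j * L) h N hh (hfin j).toFinset
    (fun x hx => by
      have := (hmemF j x).1 hx
      exact ⟨this.2.1, by linarith [this.2.2]⟩) (hcard j)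
  choose S hFS hSc hSb hSn using hfill
  have hSb' : ∀ j, ∀ x ∈ S j, j * L ≤ x ∧ x < (j + 1) * L := by
    intro j x hx
    have := hSb j x hx
    exact ⟨this.1, by linarith [this.2]⟩
  obtain ⟨l, hl, hlS, hlr⟩ := exists_enumeration L N hLpos hN S hSc hSb'
  have hnew : ∀ j, ∀ x ∈ S j, x ∉ A → ∀ i, ∀ y ∈ S i, y ≠ x → h / 4 ≤ |x - y| := by
    intro j x hx hxA i y hy hne
    obtain ⟨⟨h1, h2⟩, h3⟩ := hSn j x hx (fun hxF => hxA ((hmemF j x).1 hxF).1)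
    have h4 := hSb' i y hy
    rcases lt_trichotomy i j with hij | rfl | hij
    · have h5 : (i : ℝ) + 1 ≤ j := by exact_mod_cast hij
      have h6 : ((i : ℝ) + 1) * L ≤ j * L := by gcongr
      exact le_trans (by linarith) (le_abs_self _)
    · exact h3 y hy hne
    · have h5 : (j : ℝ) + 1 ≤ i := by exact_mod_cast hij
      have h6 : ((j : ℝ) + 1) * L ≤ i * L := by gcongr
      exact le_trans (by linarith) (neg_le_abs _)
  refine ⟨l, hl, ?_, ⟨min δ₀ (h / 4), lt_min hδ₀ (by positivity), ?_⟩, 2 * Real.pi * N, ?_⟩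
  · intro x hx
    refine hlr ⌊x / L⌋ x (hFS _ ((hmemF _ _).2 ⟨hx, ?_, ?_⟩))
    · exact (le_div_iff₀ hLpos).1 (Int.floor_le _)
    · exact (div_lt_iff₀ hLpos).1 (Int.lt_floor_add_one _)
  · intro n
    have hlt : l n < l (n + 1) := hl (by omega)
    have habs : |l (n + 1) - l n| = l (n + 1) - l n := abs_of_pos (by linarith)
    rw [← habs]
    by_cases h1 : l (n + 1) ∈ A
    · by_cases h2 : l n ∈ A
      · exact (min_le_left _ _).trans (hsep _ h1 _ h2 hlt.ne').le
      · rw [abs_sub_comm]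
        exact (min_le_right _ _).trans (hnew _ _ (hlS n) h2 _ _ (hlS (n + 1)) hlt.ne')
    · exact (min_le_right _ _).trans (hnew _ _ (hlS (n + 1)) h1 _ _ (hlS n) hlt.ne)
  · intro n
    obtain ⟨h1, h2⟩ := hSb' _ _ (hlS n)
    have h3 : (N : ℤ) * (n / N) ≤ n := Int.mul_ediv_self_le hNz.ne'
    have h4 : n ≤ (N : ℤ) * (n / N) + N := (Int.lt_mul_ediv_self_add hNz).le
    have h3' : (N : ℝ) * ((n / N : ℤ) : ℝ) ≤ n := by exact_mod_cast h3
    have h4' : (n : ℝ) ≤ N * ((n / N : ℤ) : ℝ) + N := by exact_mod_cast h4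
    generalize ((n / N : ℤ) : ℝ) = q at *
    have h5 : (1 - δ) * (q * L) ≤ (1 - δ) * l n := by gcongr
    have h6 : (1 - δ) * l n ≤ (1 - δ) * ((q + 1) * L) := by gcongr
    have h7 : (1 - δ) * (q * L) = 2 * Real.pi * (N * q) := by linear_combination q * hL
    have h8 : (1 - δ) * ((q + 1) * L) = 2 * Real.pi * (N * q + N) := by
      linear_combination (q + 1) * hL
    have h9 : 2 * Real.pi * (N * q) ≤ 2 * Real.pi * n := by gcongr
    have h10 : 2 * Real.pi * n ≤ 2 * Real.pi * (N * q + N) := by gcongr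
    rw [abs_le]
    constructor <;> linarith

/-- If `p` and `q` are the last indices with `l p ≤ 0` and `l q ≤ x`, the counting function of
`Set.range l` at `x` is `q - p`. -/
lemma countFun_range (l : ℤ → ℝ) (hl : StrictMono l) (p q : ℤ) (x : ℝ)
    (hp : ∀ n, l n ≤ 0 ↔ n ≤ p) (hq : ∀ n, l n ≤ x ↔ n ≤ q) :
    countFun (Set.range l) x = (q : ℝ) - p := by
  have key : ∀ (a b : ℤ) (s t : ℝ), a ≤ b → (∀ n, l n ≤ s ↔ n ≤ a) → (∀ n, l n ≤ t ↔ n ≤ b) →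
      ((Set.range l ∩ Set.Ioc s t).ncard : ℝ) = (b : ℝ) - a := by
    intro a b s t hab ha hb
    have h1 : Set.range l ∩ Set.Ioc s t = l '' (Finset.Ioc a b : Finset ℤ) := by
      ext y
      constructor
      · rintro ⟨⟨n, rfl⟩, h2, h3⟩
        refine ⟨n, ?_, rfl⟩
        have h4 := mt (ha n).2 (not_le.2 h2)
        simp only [Finset.coe_Ioc, Set.mem_Ioc]
        exact ⟨not_le.1 h4, (hb n).1 h3⟩
      · rintro ⟨n, hn, rfl⟩
        simp only [Finset.coe_Ioc, Set.mem_Ioc] at hn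
        exact ⟨⟨n, rfl⟩, not_le.1 (mt (ha n).1 (not_le.2 hn.1)), (hb n).2 hn.2⟩
    rw [h1, Set.ncard_image_of_injective _ hl.injective, Set.ncard_coe_finset, Int.card_Ioc]
    have : ((b - a).toNat : ℤ) = b - a := Int.toNat_of_nonneg (by omega)
    exact_mod_cast this
  unfold countFun
  split_ifs with hx
  · exact key p q 0 x ((hq p).1 (((hp p).2 le_rfl).trans hx)) hp hq
  · rw [key q p x 0 ((hp q).1 (((hq q).2 le_rfl).trans (not_le.1 hx).le)) hq hp]
    ring

lemma exists_last_index (l : ℤ → ℝ) (hl : StrictMono l)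
    (htop : Filter.Tendsto l Filter.atTop Filter.atTop)
    (hbot : Filter.Tendsto l Filter.atBot Filter.atBot) (x : ℝ) :
    ∃ q : ℤ, ∀ n, l n ≤ x ↔ n ≤ q := by
  obtain ⟨a, ha⟩ := (hbot.eventually (Filter.eventually_le_atBot x)).exists
  obtain ⟨b, hb⟩ := (htop.eventually (Filter.eventually_gt_atTop x)).exists
  obtain ⟨q, hq, hmax⟩ := Int.exists_greatest_of_bdd (P := fun n => l n ≤ x)
    ⟨b, fun n hn => (hl.lt_iff_lt.1 (lt_of_le_of_lt hn hb)).le⟩ ⟨a, ha⟩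
  exact ⟨q, fun n => ⟨hmax n, fun hn => (hl.monotone hn).trans hq⟩⟩

theorem stmt7 (α : ℝ → ℝ) (δ₀ δ₁ r₀ : ℝ) (Λ : Set ℝ)
    (hα : RegularLocallyDoubling α)
    (htop : Filter.Tendsto α Filter.atTop Filter.atTop)
    (hbot : Filter.Tendsto α Filter.atBot Filter.atBot)
    (hδ₀ : 0 < δ₀)
    (hsep : ∀ l ∈ Λ, ∀ l' ∈ Λ, l ≠ l' → δ₀ < |α l - α l'|)
    (hδ₁ : 0 < δ₁) (hr₀ : 0 < r₀)
    (hdens : ∀ a b : ℝ, a ≤ b → r₀ ≤ ∫ t in a..b, deriv α t →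
      2 * Real.pi * ((Λ ∩ Set.Icc a b).ncard : ℝ) ≤ (1 - δ₁) * ∫ t in a..b, deriv α t) :
    ∃ δ₂ : ℝ, 0 < δ₂ ∧ ∀ δ : ℝ, 0 < δ → δ < δ₂ →
      ∃ (Λ' : Set ℝ) (l : ℤ → ℝ),
        Λ ⊆ Λ' ∧ Set.range l = Λ' ∧ StrictMono l ∧
        Filter.Tendsto l Filter.atTop Filter.atTop ∧
        Filter.Tendsto l Filter.atBot Filter.atBot ∧
        (∃ δ' : ℝ, 0 < δ' ∧ ∀ n : ℤ, δ' ≤ α (l (n + 1)) - α (l n)) ∧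
        (∃ M : ℝ, 0 < M ∧ ∀ n : ℤ, α (l (n + 1)) - α (l n) ≤ M) ∧
        (∃ B : ℝ, ∀ x : ℝ, |(1 - δ) * α x - 2 * Real.pi * countFun Λ' x| ≤ B) := by
  classical
  obtain ⟨hsm, hmono, -, -⟩ := hα
  have hcont : Continuous α := hsm.continuous
  have hint : ∀ a b : ℝ, ∫ t in a..b, deriv α t = α b - α a := by
    intro a b
    refine intervalIntegral.integral_deriv_eq_sub
      (fun x _ => (hsm.differentiable (by simp)).differentiableAt) ?_
    exact (hsm.continuous_deriv (by simp)).intervalIntegrable _ _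
  have hsurj : Function.Surjective α := hcont.surjective htop hbot
  let e : ℝ ≃o ℝ := hmono.orderIsoOfSurjective α hsurj
  have hαe : ∀ y, α (e.symm y) = y := fun y => e.apply_symm_apply y
  have heα : ∀ x, e.symm (α x) = x := fun x => e.symm_apply_apply x
  refine ⟨min δ₁ 1, lt_min hδ₁ one_pos, ?_⟩
  intro δ hδ hδlt
  obtain ⟨hδδ₁, hδ1⟩ := lt_min_iff.1 hδlt
  have h1δ : 0 < 1 - δ := by linarith
  have hpi := Real.pi_pos
  obtain ⟨l, hl, hAl, ⟨δ', hδ', hgap⟩, C, hC⟩ := exists_completion (α '' Λ) δ₀ δ₁ r₀ δ hδ₀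
    (by
      rintro _ ⟨x, hx, rfl⟩ _ ⟨y, hy, rfl⟩ hne
      exact hsep x hx y hy (fun h => hne (by rw [h])))
    (by
      intro a b hab hr
      have h1 := hdens (e.symm a) (e.symm b) (e.symm.monotone hab) (by rw [hint, hαe, hαe]; exact hr)
      rw [hint, hαe, hαe] at h1
      have h2 : α '' Λ ∩ Set.Icc a b = α '' (Λ ∩ Set.Icc (e.symm a) (e.symm b)) := by
        ext y
        constructor
        · rintro ⟨⟨x, hx, rfl⟩, h3, h4⟩
          refine ⟨x, ⟨hx, ?_, ?_⟩, rfl⟩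
          · rw [← heα x]; exact e.symm.monotone h3
          · rw [← heα x]; exact e.symm.monotone h4
        · rintro ⟨x, ⟨hx, h3, h4⟩, rfl⟩
          refine ⟨⟨x, hx, rfl⟩, ?_, ?_⟩
          · rw [← hαe a]; exact hmono.monotone h3
          · rw [← hαe b]; exact hmono.monotone h4
      rw [h2, Set.ncard_image_of_injective _ hmono.injective]
      exact h1)
    hδ hδδ₁ hδ1
  have hlow : ∀ n : ℤ, 2 * Real.pi * n - C ≤ (1 - δ) * l n := fun n => by
    linarith [(abs_le.1 (hC n)).1]
  have hup : ∀ n : ℤ, (1 - δ) * l n ≤ 2 * Real.pi * n + C := fun n => by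
    linarith [(abs_le.1 (hC n)).2]
  have hcast : Filter.Tendsto (fun n : ℤ => 2 * Real.pi * (n : ℝ)) Filter.atTop Filter.atTop :=
    tendsto_intCast_atTop_atTop.const_mul_atTop (by positivity)
  have hcast' : Filter.Tendsto (fun n : ℤ => 2 * Real.pi * (n : ℝ)) Filter.atBot Filter.atBot :=
    (tendsto_intCast_atBot_iff.2 Filter.tendsto_id).const_mul_atBot (by positivity)
  have hltop : Filter.Tendsto l Filter.atTop Filter.atTop :=
    (Filter.tendsto_const_mul_atTop_of_pos h1δ).1 (Filter.tendsto_atTop_mono hlow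
      (Filter.tendsto_atTop_add_const_right _ (-C) hcast))
  have hlbot : Filter.Tendsto l Filter.atBot Filter.atBot :=
    (Filter.tendsto_const_mul_atBot_of_pos h1δ).1 (Filter.tendsto_atBot_mono hup
      (Filter.tendsto_atBot_add_const_right _ C hcast'))
  have hk : StrictMono (fun n => e.symm (l n)) := e.symm.strictMono.comp hl
  have hktop : Filter.Tendsto (fun n => e.symm (l n)) Filter.atTop Filter.atTop :=
    e.symm.tendsto_atTop.comp hltop
  have hkbot : Filter.Tendsto (fun n => e.symm (l n)) Filter.atBot Filter.atBot :=
    e.symm.tendsto_atBot.comp hlbot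
  refine ⟨Set.range (fun n => e.symm (l n)), fun n => e.symm (l n), ?_, rfl, hk, hktop, hkbot,
    ⟨δ', hδ', ?_⟩, ?_, ?_⟩
  · intro x hx
    obtain ⟨n, hn⟩ := hAl ⟨x, hx, rfl⟩
    exact ⟨n, by simp only [hn, heα]⟩
  · intro n
    simp only [hαe]
    exact hgap n
  · have hC0 : 0 ≤ C := (abs_nonneg _).trans (hC 0)
    refine ⟨(2 * Real.pi + 2 * C) / (1 - δ), by positivity, ?_⟩
    intro n
    simp only [hαe]
    rw [le_div_iff₀ h1δ]
    have h1 := hup (n + 1)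
    have h2 := hlow n
    push_cast at h1
    linarith
  · obtain ⟨p, hp⟩ := exists_last_index _ hk hktop hkbot 0
    refine ⟨2 * Real.pi * |(p : ℝ)| + 2 * Real.pi + C, ?_⟩
    intro x
    obtain ⟨q, hq⟩ := exists_last_index _ hk hktop hkbot x
    rw [countFun_range _ hk p q x hp hq]
    have h1 : l q ≤ α x := by
      have := hmono.monotone ((hq q).2 le_rfl)
      rwa [hαe] at this
    have h2 : α x ≤ l (q + 1) := by
      have := hmono.monotone (not_le.1 (mt (hq (q + 1)).1 (by omega))).le
      rwa [hαe] at this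
    have h3 : (1 - δ) * l q ≤ (1 - δ) * α x := by gcongr
    have h4 : (1 - δ) * α x ≤ (1 - δ) * l (q + 1) := by gcongr
    have h5 := hlow q
    have h6 := hup (q + 1)
    push_cast at h6
    have h7 : 2 * Real.pi * (p : ℝ) ≤ 2 * Real.pi * |(p : ℝ)| := by
      gcongr; exact le_abs_self _
    have h8 : 2 * Real.pi * (-(p : ℝ)) ≤ 2 * Real.pi * |(p : ℝ)| := by
      gcongr; exact neg_le_abs _
    rw [abs_le]
    constructor <;> linarith
end

section
/- Let α : ℝ → ℝ be twice continuously differentiable and strictly increasing with α'(x) > 0 for all x, and suppose there is a constant C > 0 such that |α''(x)| ≤ C·α'(x)² for all x ∈ ℝ. Then for all x, y ∈ ℝ with |α(x) − α(y)| ≤ 1 one has e^(−C)·α'(y) ≤ α'(x) ≤ e^C·α'(y). -/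
/-!
The derivative of `log α'` is `α'' / α'`, which the hypothesis bounds in absolute value by
`C * α' = (C * α)'`. Hence `C * α - log α'` and `C * α + log α'` are both nondecreasing, so that
`|log (α' x) - log (α' y)| ≤ C * |α x - α y| ≤ C`, and exponentiating gives the two inequalities.
-/

/-- `log α'` is `C`-Lipschitz for the distance `|α x - α y|`. -/
theorem abs_log_deriv_sub_le (α : ℝ → ℝ) (C : ℝ)
    (hα : ContDiff ℝ 2 α) (hmono : StrictMono α)
    (h' : ∀ x : ℝ, 0 < deriv α x)
    (h'' : ∀ x : ℝ, |deriv (deriv α) x| ≤ C * (deriv α x) ^ 2) (x y : ℝ) :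
    |Real.log (deriv α x) - Real.log (deriv α y)| ≤ C * |α x - α y| := by
  have hd1 : ∀ t, HasDerivAt α (deriv α t) t := fun t =>
    (hα.differentiable (by norm_num) t).hasDerivAt
  have hd2 : ∀ t, HasDerivAt (deriv α) (deriv (deriv α) t) t := fun t =>
    ((hα.deriv' (n := 1)).differentiable (by norm_num) t).hasDerivAt
  have hlog : ∀ t, HasDerivAt (fun s => Real.log (deriv α s))
      (deriv (deriv α) t / deriv α t) t := fun t => (hd2 t).log (h' t).ne'
  have hbound : ∀ t, |deriv (deriv α) t / deriv α t| ≤ C * deriv α t := fun t => by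
    rw [abs_div, abs_of_pos (h' t), div_le_iff₀ (h' t)]
    nlinarith [h'' t]
  have hsub : Monotone (fun s => C * α s - Real.log (deriv α s)) :=
    monotone_of_hasDerivAt_nonneg (fun t => ((hd1 t).const_mul C).sub (hlog t))
      (fun t => by
        have := (abs_le.mp (hbound t)).2
        simpa using this)
  have hadd : Monotone (fun s => C * α s + Real.log (deriv α s)) :=
    monotone_of_hasDerivAt_nonneg (fun t => ((hd1 t).const_mul C).add (hlog t))
      (fun t => by
        have := (abs_le.mp (hbound t)).1
        simp only [Pi.zero_apply]
        linarith)
  rcases le_total x y with hxy | hxy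
  · have h1 := hsub hxy
    have h2 := hadd hxy
    have h3 := hmono.monotone hxy
    simp only at h1 h2
    rw [abs_of_nonpos (sub_nonpos.mpr h3), abs_le]
    constructor <;> linarith
  · have h1 := hsub hxy
    have h2 := hadd hxy
    have h3 := hmono.monotone hxy
    simp only at h1 h2
    rw [abs_of_nonneg (sub_nonneg.mpr h3), abs_le]
    constructor <;> linarith

theorem stmt8 (α : ℝ → ℝ) (C : ℝ) (hC : 0 < C)
    (hα : ContDiff ℝ 2 α) (hmono : StrictMono α)
    (h' : ∀ x : ℝ, 0 < deriv α x)
    (h'' : ∀ x : ℝ, |deriv (deriv α) x| ≤ C * (deriv α x) ^ 2) :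
    ∀ x y : ℝ, |α x - α y| ≤ 1 →
      Real.exp (-C) * deriv α y ≤ deriv α x ∧ deriv α x ≤ Real.exp C * deriv α y := by
  intro x y hxy
  have hlip := abs_log_deriv_sub_le α C hα hmono h' h'' x y
  have hle : |Real.log (deriv α x) - Real.log (deriv α y)| ≤ C :=
    hlip.trans (mul_le_of_le_one_right hC.le hxy)
  obtain ⟨h1, h2⟩ := abs_le.mp hle
  rw [← Real.exp_log (h' x), ← Real.exp_log (h' y), ← Real.exp_add, ← Real.exp_add,
    Real.exp_le_exp, Real.exp_le_exp]
  constructor <;> linarith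
end

section
/- Let α : ℝ → ℝ be continuously differentiable and strictly increasing with α'(x) > 0 for all x, and suppose there are constants 0 < m ≤ M such that m·α'(y) ≤ α'(x) ≤ M·α'(y) whenever |α(x) − α(y)| ≤ 1. Then the measure μ_α with dμ_α = α'(x) dx is locally doubling: there exists a constant C > 0 such that for every bounded interval I, if μ_α(2I) ≤ 1 then μ_α(2I) ≤ C·μ_α(I), where 2I denotes the interval with the same center as I and twice its length. -/
open MeasureTheory

/-! By the fundamental theorem of calculus, the measure of `2I = [c - 2r, c + 2r]` is the increment
of `α` over it. If it is at most `1`, monotonicity gives `|α x - α c| ≤ 1` on `2I`, so the hypothesis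
yields `m α'(c) ≤ α'(x) ≤ M α'(c)` there. Hence `μ(2I) ≤ 4r M α'(c)` and `μ(I) ≥ 2r m α'(c)`,
so `C = 2M/m` works. -/

theorem stmt9 (α : ℝ → ℝ) (m M : ℝ)
    (hα : ContDiff ℝ 1 α) (hmono : StrictMono α)
    (h' : ∀ x : ℝ, 0 < deriv α x)
    (hm : 0 < m) (hmM : m ≤ M)
    (hcomp : ∀ x y : ℝ, |α x - α y| ≤ 1 →
      m * deriv α y ≤ deriv α x ∧ deriv α x ≤ M * deriv α y) :
    ∃ C : ℝ, 0 < C ∧ ∀ c r : ℝ, 0 ≤ r →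
      (∫ t in (c - 2 * r)..(c + 2 * r), deriv α t) ≤ 1 →
      (∫ t in (c - 2 * r)..(c + 2 * r), deriv α t) ≤
        C * ∫ t in (c - r)..(c + r), deriv α t := by
  have hM : 0 < M := hm.trans_le hmM
  have hcont : Continuous (deriv α) := hα.continuous_deriv le_rfl
  have hint : ∀ a b : ℝ, IntervalIntegrable (deriv α) volume a b :=
    fun a b => hcont.intervalIntegrable a b
  refine ⟨2 * M / m, by positivity, fun c r hr hle => ?_⟩
  have hftc : ∫ t in (c - 2 * r)..(c + 2 * r), deriv α t = α (c + 2 * r) - α (c - 2 * r) :=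
    intervalIntegral.integral_deriv_eq_sub
      (fun x _ => (hα.differentiable one_ne_zero).differentiableAt) (hint _ _)
  have hinc : α (c + 2 * r) - α (c - 2 * r) ≤ 1 := hftc ▸ hle
  have hclose : ∀ x ∈ Set.Icc (c - 2 * r) (c + 2 * r), |α x - α c| ≤ 1 := by
    intro x hx
    have h1 := hmono.monotone hx.1
    have h2 := hmono.monotone hx.2
    have h3 : α (c - 2 * r) ≤ α c := hmono.monotone (by linarith)
    have h4 : α c ≤ α (c + 2 * r) := hmono.monotone (by linarith)
    rw [abs_le]
    constructor <;> linarith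
  have hup : ∫ t in (c - 2 * r)..(c + 2 * r), deriv α t ≤ 4 * r * (M * deriv α c) := by
    calc _ ≤ ∫ _ in (c - 2 * r)..(c + 2 * r), M * deriv α c :=
          intervalIntegral.integral_mono_on (by linarith) (hint _ _) (by simp)
            fun x hx => (hcomp x c (hclose x hx)).2
      _ = 4 * r * (M * deriv α c) := by
          rw [intervalIntegral.integral_const, smul_eq_mul]; ring
  have hlow : 2 * r * (m * deriv α c) ≤ ∫ t in (c - r)..(c + r), deriv α t := by
    calc _ = ∫ _ in (c - r)..(c + r), m * deriv α c := by
          rw [intervalIntegral.integral_const, smul_eq_mul]; ring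
      _ ≤ _ := intervalIntegral.integral_mono_on (by linarith) (by simp) (hint _ _)
            fun x hx => (hcomp x c (hclose x ⟨by linarith [hx.1], by linarith [hx.2]⟩)).1
  calc _ ≤ 4 * r * (M * deriv α c) := hup
    _ = 2 * M / m * (2 * r * (m * deriv α c)) := by field_simp; ring
    _ ≤ _ := by gcongr
end

section
/- For every x > 0 one has ∫_{−1/x}^{x−1} (1+xt)/((x−t)(1+t²)) dt = (1/2)·log(1+x²) + (1/2)·log(1+(x−1)²). (Note that −1/x < x−1 for every x > 0, and the integrand has no singularity on the interval of integration since x > x−1.) -/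
open MeasureTheory

/-!
Since `(1 + x t) / ((x - t) (1 + t²)) = 1 / (x - t) + t / (1 + t²)`, the function
`F t = (1 / 2) log (1 + t²) - log (x - t)` is a primitive of the integrand on `t < x`. Both
endpoints lie there, so the integral is `F (x - 1) - F (-1 / x)`, and `F (-1 / x)` simplifies to
`-(1 / 2) log (1 + x²)` because `x + 1 / x = (1 + x²) / x` and `1 + 1 / x² = (1 + x²) / x²`.
-/

theorem stmt14 (x : ℝ) (hx : 0 < x) :
    ∫ t in (-1 / x)..(x - 1), (1 + x * t) / ((x - t) * (1 + t ^ 2)) =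
      (1 / 2) * Real.log (1 + x ^ 2) + (1 / 2) * Real.log (1 + (x - 1) ^ 2) := by
  have hlt : ∀ t ∈ Set.uIcc (-1 / x) (x - 1), 0 < x - t := by
    intro t ht
    have h1 : -1 / x < x := lt_trans (div_neg_of_neg_of_pos (by norm_num) hx) hx
    have h2 : t ≤ max (-1 / x) (x - 1) := ht.2
    have h3 : max (-1 / x) (x - 1) < x := max_lt h1 (by linarith)
    linarith
  have hderiv : ∀ t ∈ Set.uIcc (-1 / x) (x - 1),
      HasDerivAt (fun t : ℝ => (1 / 2) * Real.log (1 + t ^ 2) - Real.log (x - t))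
        ((1 + x * t) / ((x - t) * (1 + t ^ 2))) t := by
    intro t ht
    have h0 : x - t ≠ 0 := (hlt t ht).ne'
    have h1 : 1 + t ^ 2 ≠ 0 := by positivity
    have hA := ((((hasDerivAt_id t).pow 2).const_add 1).log h1).const_mul (1 / 2)
    have hB := ((hasDerivAt_id t).const_sub x).log h0
    refine (hA.sub hB).congr_deriv ?_
    simp only [id, Pi.pow_apply]
    field_simp
    push_cast
    ring
  have hint : IntervalIntegrable (fun t : ℝ => (1 + x * t) / ((x - t) * (1 + t ^ 2)))
      volume (-1 / x) (x - 1) := by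
    apply ContinuousOn.intervalIntegrable
    apply ContinuousOn.div (by fun_prop) (by fun_prop)
    intro t ht
    exact mul_ne_zero (hlt t ht).ne' (by positivity)
  rw [intervalIntegral.integral_eq_sub_of_hasDerivAt hderiv hint]
  have e1 : 1 + (-1 / x) ^ 2 = (1 + x ^ 2) / x ^ 2 := by field_simp; ring
  have e2 : x - -1 / x = (1 + x ^ 2) / x := by field_simp; ring
  have e3 : x - (x - 1) = 1 := by ring
  have hp : 1 + x ^ 2 ≠ 0 := by positivity
  simp only [e1, e2, e3]
  rw [Real.log_div hp (by positivity), Real.log_div hp hx.ne', Real.log_pow, Real.log_one]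
  push_cast
  ring
end

section
/- Let a < b be real numbers, let c = (a+b)/2 be the midpoint, and define u : (a,b) → ℝ by u(t) = 1/2 for t ∈ (a,c) and u(t) = −1/2 for t ∈ [c,b). Then for every real x ∉ [a,b] the integral ∫_a^b u(t)/(t−x) dt converges and equals log( |x−c| / sqrt((x−a)(x−b)) ), and this quantity is nonnegative. Equivalently, exp(−∫_a^b u(t)/(t−x) dt) = sqrt(|x−a|·|x−b|)/|x−c| ≤ 1. -/
/-!
Splitting at the midpoint `c = (a + b) / 2`, the integrand agrees on the two open halves with
`(1/2) / (t - x)` and `-(1/2) / (t - x)`, which are integrable since `x ∉ [a, b]`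
(`cauchy_kernel_integral`). The integral is thus `log |c - x| - (log |a - x| + log |b - x|) / 2`,
the logarithm of the stated ratio. All inequalities come from
`(x - c)² = (x - a) (x - b) + ((b - a) / 2)²`, with `(x - a) (x - b) > 0`.
-/


open MeasureTheory

theorem cauchy_kernel_integral (p q x k : ℝ) (hpq : p ≤ q) (hx : x ∉ Set.Icc p q) :
    IntervalIntegrable (fun t : ℝ => k / (t - x)) volume p q ∧
      (∫ t in p..q, k / (t - x)) = k * (Real.log (q - x) - Real.log (p - x)) := by
  have hne : ∀ t ∈ Set.uIcc p q, t - x ≠ 0 := by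
    intro t ht h
    rw [Set.uIcc_of_le hpq] at ht
    exact hx (by rwa [sub_eq_zero.mp h] at ht)
  refine ⟨ContinuousOn.intervalIntegrable (continuousOn_const.div (by fun_prop) hne), ?_⟩
  simp only [div_eq_mul_inv]
  rw [intervalIntegral.integral_const_mul,
    intervalIntegral.integral_comp_sub_right (fun t : ℝ => t⁻¹) x, integral_inv,
    Real.log_div (hne q Set.right_mem_uIcc) (hne p Set.left_mem_uIcc)]
  intro h
  rw [Set.uIcc_of_le (by linarith)] at h
  exact hx ⟨by linarith [h.1], by linarith [h.2]⟩

theorem stmt15 (a b x : ℝ) (hab : a < b) (hx : x ∉ Set.Icc a b) :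
    IntervalIntegrable
      (fun t : ℝ => (if t < (a + b) / 2 then (1 / 2 : ℝ) else -(1 / 2)) / (t - x))
      volume a b ∧
    (∫ t in a..b, (if t < (a + b) / 2 then (1 / 2 : ℝ) else -(1 / 2)) / (t - x)) =
      Real.log (|x - (a + b) / 2| / Real.sqrt ((x - a) * (x - b))) ∧
    0 ≤ Real.log (|x - (a + b) / 2| / Real.sqrt ((x - a) * (x - b))) ∧
    Real.exp (-(∫ t in a..b,
        (if t < (a + b) / 2 then (1 / 2 : ℝ) else -(1 / 2)) / (t - x))) =
      Real.sqrt (|x - a| * |x - b|) / |x - (a + b) / 2| ∧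
    Real.sqrt (|x - a| * |x - b|) / |x - (a + b) / 2| ≤ 1 := by
  obtain ⟨c, hc⟩ : ∃ c, c = (a + b) / 2 := ⟨_, rfl⟩
  rw [← hc]
  have hac : a < c := by linarith
  have hcb : c < b := by linarith
  have hP : 0 < (x - a) * (x - b) := by
    rcases lt_or_ge x a with h | h
    · exact mul_pos_of_neg_of_neg (by linarith) (by linarith)
    · have : b < x := by
        by_contra! h'
        exact hx ⟨h, h'⟩
      exact mul_pos (by linarith) (by linarith)
  have hxa : x - a ≠ 0 := left_ne_zero_of_mul hP.ne'
  have hxb : x - b ≠ 0 := right_ne_zero_of_mul hP.ne'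
  have hxc : x - c ≠ 0 := fun h => hx ⟨by linarith, by linarith⟩
  have hC : 0 < |x - c| := abs_pos.mpr hxc
  have hS : 0 < Real.sqrt ((x - a) * (x - b)) := Real.sqrt_pos.mpr hP
  have hle : Real.sqrt ((x - a) * (x - b)) ≤ |x - c| := by
    rw [← Real.sqrt_sq_eq_abs]
    apply Real.sqrt_le_sqrt
    rw [hc]
    nlinarith [sq_nonneg (b - a)]
  obtain ⟨i1, e1⟩ := cauchy_kernel_integral a c x (1 / 2) hac.le
    (fun h => hx ⟨h.1, h.2.trans hcb.le⟩)
  obtain ⟨i2, e2⟩ := cauchy_kernel_integral c b x (-(1 / 2)) hcb.le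
    (fun h => hx ⟨hac.le.trans h.1, h.2⟩)
  have g1 : Set.EqOn (fun t : ℝ => (1 / 2 : ℝ) / (t - x))
      (fun t : ℝ => (if t < c then (1 / 2 : ℝ) else -(1 / 2)) / (t - x)) (Set.uIoo a c) := by
    intro t ht
    rw [Set.uIoo_of_le hac.le] at ht
    simp only [if_pos ht.2]
  have g2 : Set.EqOn (fun t : ℝ => (-(1 / 2) : ℝ) / (t - x))
      (fun t : ℝ => (if t < c then (1 / 2 : ℝ) else -(1 / 2)) / (t - x)) (Set.uIoo c b) := by
    intro t ht
    rw [Set.uIoo_of_le hcb.le] at ht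
    simp only [if_neg (not_lt.mpr ht.1.le)]
  have j1 := i1.congr_uIoo g1
  have j2 := i2.congr_uIoo g2
  have hI : (∫ t in a..b, (if t < c then (1 / 2 : ℝ) else -(1 / 2)) / (t - x)) =
      Real.log (|x - c| / Real.sqrt ((x - a) * (x - b))) := by
    rw [← intervalIntegral.integral_add_adjacent_intervals j1 j2,
      ← intervalIntegral.integral_congr_uIoo g1, ← intervalIntegral.integral_congr_uIoo g2,
      e1, e2, Real.log_div hC.ne' hS.ne', Real.log_sqrt hP.le, Real.log_mul hxa hxb,
      Real.log_abs, ← Real.log_neg_eq_log (x - a), ← Real.log_neg_eq_log (x - b),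
      ← Real.log_neg_eq_log (x - c), neg_sub, neg_sub, neg_sub]
    ring
  have habs : |x - a| * |x - b| = (x - a) * (x - b) := by
    rw [← abs_mul, abs_of_pos hP]
  refine ⟨j1.trans j2, hI, Real.log_nonneg ((one_le_div hS).mpr hle), ?_, ?_⟩
  · rw [hI, Real.exp_neg, Real.exp_log (div_pos hC hS), inv_div, habs]
  · rw [habs]
    exact (div_le_one hC).mpr hle
end

section
/- Let a < b be real numbers, let c = (a+b)/2, and define u : (a,b) → ℝ by u(t) = 1/2 for t ∈ (a,c) and u(t) = −1/2 for t ∈ [c,b). Then for every real x with |x−c| ≥ b−a one has 0 ≤ ∫_a^b u(t)/(t−x) dt ≤ (b−a)²/(x−c)². -/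
/-!
Put `c = (a + b) / 2`, `d = (b - a) / 2` and `y = x - c`. The hypothesis says `2 * d ≤ |y|`, so `x`
lies outside `[a, b]`, and integrating the kernel on each half interval gives
`(log ((c - x) / (a - x)) - log ((b - x) / (c - x))) / 2 = log (y ^ 2 / (y ^ 2 - d ^ 2)) / 2`.
The argument of the logarithm is at least `1`, whence the lower bound. The upper bound follows from
`log q ≤ q - 1` with `q - 1 = d ^ 2 / (y ^ 2 - d ^ 2)`, because `y ^ 2 ≥ 4 * d ^ 2`.
-/

open MeasureTheory

/-- The Cauchy kernel of a constant on `[p, q]`, for a function `f` that has this constant value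
only on the open interval; it applies to a step function on each of its steps. -/
lemma step_integral {f : ℝ → ℝ} {p q x k : ℝ} (hpq : p ≤ q) (hx : x ∉ Set.Icc p q)
    (hf : ∀ t ∈ Set.Ioo p q, f t = k) :
    IntervalIntegrable (fun t => f t / (t - x)) volume p q ∧
      ∫ t in p..q, f t / (t - x) = k * Real.log ((q - x) / (p - x)) := by
  have hne : ∀ t ∈ Set.uIcc p q, t - x ≠ 0 := by
    intro t ht h
    rw [Set.uIcc_of_le hpq] at ht
    exact hx (by rwa [← sub_eq_zero.mp h])
  have hEq : Set.EqOn (fun t => k * (t - x)⁻¹) (fun t => f t / (t - x)) (Set.uIoo p q) := by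
    intro t ht
    rw [Set.uIoo_of_le hpq] at ht
    simp only [hf t ht, div_eq_mul_inv]
  have hint : IntervalIntegrable (fun t => k * (t - x)⁻¹) volume p q :=
    (ContinuousOn.mul continuousOn_const
      (ContinuousOn.inv₀ (by fun_prop) hne)).intervalIntegrable
  refine ⟨hint.congr_uIoo hEq, ?_⟩
  rw [← intervalIntegral.integral_congr_uIoo hEq, intervalIntegral.integral_const_mul,
    intervalIntegral.integral_comp_sub_right (fun t => t⁻¹) x, integral_inv]
  intro h
  rw [Set.uIcc_of_le (by linarith)] at h
  exact hx ⟨by linarith [h.1], by linarith [h.2]⟩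

theorem stmt16 (a b x : ℝ) (hab : a < b) (hx : b - a ≤ |x - (a + b) / 2|) :
    0 ≤ (∫ t in a..b, (if t < (a + b) / 2 then (1 / 2 : ℝ) else -(1 / 2)) / (t - x)) ∧
    (∫ t in a..b, (if t < (a + b) / 2 then (1 / 2 : ℝ) else -(1 / 2)) / (t - x)) ≤
      (b - a) ^ 2 / (x - (a + b) / 2) ^ 2 := by
  obtain ⟨y, hy⟩ : ∃ y, y = x - (a + b) / 2 := ⟨_, rfl⟩
  obtain ⟨d, hd⟩ : ∃ d, d = (b - a) / 2 := ⟨_, rfl⟩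
  have hd0 : 0 < d := by linarith
  have hyd : 2 * d ≤ |y| := by rw [hy]; linarith
  have hsq : 4 * d ^ 2 ≤ y ^ 2 := by
    rw [← sq_abs y]; nlinarith
  have hout : x ∉ Set.Icc a b := by
    rintro ⟨h1, h2⟩
    have : |y| ≤ d := abs_le.mpr ⟨by linarith, by linarith⟩
    linarith
  obtain ⟨i1, e1⟩ := step_integral (f := fun t => if t < (a + b) / 2 then (1 / 2 : ℝ) else -(1 / 2))
    (p := a) (q := (a + b) / 2) (x := x) (k := 1 / 2) (by linarith)
    (fun h => hout ⟨h.1, by linarith [h.2]⟩) (fun t ht => if_pos ht.2)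
  obtain ⟨i2, e2⟩ := step_integral (f := fun t => if t < (a + b) / 2 then (1 / 2 : ℝ) else -(1 / 2))
    (p := (a + b) / 2) (q := b) (x := x) (k := -(1 / 2)) (by linarith)
    (fun h => hout ⟨by linarith [h.1], h.2⟩) (fun t ht => if_neg (not_lt.mpr ht.1.le))
  have hy0 : y ≠ 0 := by
    rintro rfl
    rw [abs_zero] at hyd
    linarith
  have hpos : 0 < y ^ 2 - d ^ 2 := by nlinarith
  have ha : -y - d ≠ 0 := fun h => by nlinarith
  have hb : -y + d ≠ 0 := fun h => by nlinarith
  have key : (∫ t in a..b, (if t < (a + b) / 2 then (1 / 2 : ℝ) else -(1 / 2)) / (t - x)) =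
      1 / 2 * Real.log (y ^ 2 / (y ^ 2 - d ^ 2)) := by
    rw [← intervalIntegral.integral_add_adjacent_intervals i1 i2, e1, e2,
      show (a + b) / 2 - x = -y by rw [hy]; ring, show a - x = -y - d by rw [hy, hd]; ring,
      show b - x = -y + d by rw [hy, hd]; ring,
      show y ^ 2 / (y ^ 2 - d ^ 2) = (-y / (-y - d)) / ((-y + d) / -y) by
        rw [show y ^ 2 - d ^ 2 = (-y - d) * (-y + d) by ring]
        field_simp,
      Real.log_div (div_ne_zero (neg_ne_zero.mpr hy0) ha) (div_ne_zero hb (neg_ne_zero.mpr hy0))]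
    ring
  rw [key, ← hy, show b - a = 2 * d by linarith]
  constructor
  · have : 0 ≤ Real.log (y ^ 2 / (y ^ 2 - d ^ 2)) :=
      Real.log_nonneg ((one_le_div hpos).mpr (by nlinarith))
    linarith
  · have h1 : Real.log (y ^ 2 / (y ^ 2 - d ^ 2)) ≤ y ^ 2 / (y ^ 2 - d ^ 2) - 1 :=
      Real.log_le_sub_one_of_pos (div_pos (by positivity) hpos)
    have h2 : y ^ 2 / (y ^ 2 - d ^ 2) - 1 ≤ 2 * ((2 * d) ^ 2 / y ^ 2) := by
      rw [div_sub_one hpos.ne', ← mul_div_assoc,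
        div_le_div_iff₀ hpos (by positivity)]
      nlinarith [mul_nonneg (sq_nonneg d) (sub_nonneg.mpr hsq), sq_nonneg (d ^ 2)]
    linarith
end
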